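/- Let x be a uniformly recurrent infinite word over a finite alphabet A and let u and v be nonempty prefixes of x with |v| ≤ |u|. Then every return to u in x is a concatenation of returns to v in x; that is, for every w ∈ Ret_x(u) there exist w_1, …, w_m ∈ Ret_x(v) with w = w_1 w_2 ⋯ w_m. -/

import Mathlib

/-- The factor of the infinite word `x` of length `n` starting at position `i`,
i.e. the word `x_i x_{i+1} ⋯ x_{i+n-1}`. -/
def seg {A : Type*} (x : ℕ → A) (i n : ℕ) : List A :=
  (List.range n).map fun k => x (i + k)

/-- `u` is a (nonempty, finite) factor of the infinite word `x`. -/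
def IsFactor {A : Type*} (x : ℕ → A) (u : List A) : Prop :=
  u ≠ [] ∧ ∃ i, u = seg x i u.length

/-- `u` is a (finite) prefix of the infinite word `x`. -/
def IsPrefixOf {A : Type*} (x : ℕ → A) (u : List A) : Prop :=
  u = seg x 0 u.length

/-- The finite word `u` occurs in the finite word `v` at position `i`. -/
def OccursAt {A : Type*} (u v : List A) (i : ℕ) : Prop :=
  i + u.length ≤ v.length ∧ (v.drop i).take u.length = u

/-- `w` is a return word to `u` in `x`: `w` is nonempty, `w ++ u` is a factor of
`x`, and `u` occurs exactly twice in `w ++ u`. -/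
def IsReturn {A : Type*} (x : ℕ → A) (u w : List A) : Prop :=
  w ≠ [] ∧ IsFactor x (w ++ u) ∧ {i | OccursAt u (w ++ u) i}.ncard = 2

/-- The set of return words to `u` in `x`. -/
def Ret {A : Type*} (x : ℕ → A) (u : List A) : Set (List A) :=
  {w | IsReturn x u w}

/-- `x` is uniformly recurrent: every factor has a nonempty and finite set of
return words. -/
def UniformlyRecurrent {A : Type*} (x : ℕ → A) : Prop :=
  ∀ u, IsFactor x u → (Ret x u).Nonempty ∧ (Ret x u).Finite

/-- `x` is aperiodic: there is no `n ≥ 1` with `x (i + n) = x i` for all `i`. -/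
def Aperiodic {A : Type*} (x : ℕ → A) : Prop :=
  ¬ ∃ n : ℕ, 1 ≤ n ∧ ∀ i : ℕ, x (i + n) = x i

theorem seg_length' {A : Type*} (x : ℕ → A) (i n : ℕ) : (seg x i n).length = n := by
  simp [seg]

theorem seg_append' {A : Type*} (x : ℕ → A) (i m n : ℕ) :
    seg x i (m + n) = seg x i m ++ seg x (i + m) n := by
  simp [seg, List.range_add, Function.comp_def, Nat.add_assoc]

theorem seg_take' {A : Type*} (x : ℕ → A) (i m n : ℕ) (h : m ≤ n) :
    (seg x i n).take m = seg x i m := by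
  obtain ⟨k, rfl⟩ := Nat.exists_eq_add_of_le h
  rw [seg_append', List.take_left' (seg_length' x i m)]

theorem seg_drop' {A : Type*} (x : ℕ → A) (i m n : ℕ) :
    (seg x i (m + n)).drop m = seg x (i + m) n := by
  rw [seg_append', List.drop_left' (seg_length' x i m)]

theorem occurs_iff {A : Type*} (x : ℕ → A) (v : List A) (i n j : ℕ) :
    OccursAt v (seg x i (n + v.length)) j ↔ j ≤ n ∧ seg x (i + j) v.length = v := by
  unfold OccursAt
  rw [seg_length']
  constructor
  · rintro ⟨h1, h2⟩
    have hj : j ≤ n := by omega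
    obtain ⟨k, rfl⟩ := Nat.exists_eq_add_of_le hj
    rw [Nat.add_assoc, seg_drop', seg_take' _ _ _ _ (by omega)] at h2
    exact ⟨hj, h2⟩
  · rintro ⟨hj, h2⟩
    obtain ⟨k, rfl⟩ := Nat.exists_eq_add_of_le hj
    rw [Nat.add_assoc, seg_drop', seg_take' _ _ _ _ (by omega)]
    exact ⟨by omega, h2⟩

theorem isReturn_of {A : Type*} (x : ℕ → A) (v : List A) (hv : v ≠ []) (i n j : ℕ)
    (hn : seg x (i + n) v.length = v) (hjn : j < n) (hj : seg x (i + j) v.length = v)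
    (huniq : ∀ k < n, seg x (i + k) v.length = v → k = j) :
    seg x i n ∈ Ret x v := by
  have happ : seg x i n ++ v = seg x i (n + v.length) := by
    rw [seg_append', hn]
  refine ⟨?_, ⟨by simp [hv], i, ?_⟩, ?_⟩
  · intro h
    have := congrArg List.length h
    rw [seg_length'] at this
    simp at this
    omega
  · rw [happ, seg_length']
  · rw [happ]
    have : {k | OccursAt v (seg x i (n + v.length)) k} = {j, n} := by
      ext k
      simp only [Set.mem_setOf_eq, Set.mem_insert_iff, Set.mem_singleton_iff, occurs_iff]
      constructor
      · rintro ⟨h1, h2⟩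
        rcases Nat.lt_or_ge k n with h | h
        · exact Or.inl (huniq k h h2)
        · right; omega
      · rintro (rfl | rfl)
        · exact ⟨by omega, hj⟩
        · exact ⟨le_rfl, hn⟩
    rw [this, Set.ncard_pair (by omega)]

theorem decomp {A : Type*} (x : ℕ → A) (v : List A) (hv : v ≠ []) (i : ℕ) :
    ∀ n, seg x (i + n) v.length = v → (∃ j < n, seg x (i + j) v.length = v) →
      ∃ l : List (List A), (∀ z ∈ l, z ∈ Ret x v) ∧ l.flatten = seg x i n := by
  classical
  intro n
  induction n using Nat.strong_induction_on with
  | _ n ih =>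
    rintro hn ⟨j₀, hj₀n, hj₀⟩
    obtain ⟨j, hjn, hj, hmax⟩ : ∃ j < n, seg x (i + j) v.length = v ∧
        ∀ k < n, seg x (i + k) v.length = v → k ≤ j := by
      let P : ℕ → Prop := fun k => seg x (i + k) v.length = v
      have hle := Nat.findGreatest_le (P := P) (n - 1)
      exact ⟨Nat.findGreatest P (n - 1), by omega,
        Nat.findGreatest_spec (P := P) (m := j₀) (by omega) hj₀,
        fun k hk hP => Nat.le_findGreatest (P := P) (by omega) hP⟩
    by_cases h : ∃ k < j, seg x (i + k) v.length = v
    · obtain ⟨l, hl, hfl⟩ := ih j hjn hj h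
      obtain ⟨d, rfl⟩ := Nat.exists_eq_add_of_le hjn.le
      refine ⟨l ++ [seg x (i + j) d], ?_, ?_⟩
      · intro z hz
        rw [List.mem_append, List.mem_singleton] at hz
        rcases hz with hz | rfl
        · exact hl z hz
        · refine isReturn_of x v hv (i + j) d 0 (by rwa [Nat.add_assoc]) (by omega) hj ?_
          intro k hk hP
          have := hmax (j + k) (by omega) (by rwa [← Nat.add_assoc])
          omega
      · simp [hfl, seg_append']
    · refine ⟨[seg x i n], ?_, by simp⟩
      intro z hz
      rw [List.mem_singleton] at hz
      subst hz
      refine isReturn_of x v hv i n j hn hjn hj ?_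
      intro k hk hP
      have h1 := hmax k hk hP
      by_contra hne
      exact h ⟨k, by omega, hP⟩

/-- Let `x` be a uniformly recurrent infinite word over a finite alphabet
and let `u`, `v` be nonempty prefixes of `x` with `|v| ≤ |u|`. Then every return word to
`u` in `x` is a concatenation of return words to `v` in `x`. -/
theorem stmt7 {A : Type*} [Fintype A] (x : ℕ → A) (hUR : UniformlyRecurrent x)
    (u v : List A) (hu : u ≠ []) (hv : v ≠ [])
    (hupref : IsPrefixOf x u) (hvpref : IsPrefixOf x v)
    (hlen : v.length ≤ u.length)
    (w : List A) (hw : w ∈ Ret x u) :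
    ∃ l : List (List A), (∀ z ∈ l, z ∈ Ret x v) ∧ l.flatten = w := by
  obtain ⟨-, ⟨-, i, hi⟩, hcard⟩ := hw
  rw [List.length_append] at hi
  have hvu : u.take v.length = v := by
    rw [hupref, seg_take' _ _ _ _ hlen]; exact hvpref.symm
  have hP : ∀ k, seg x k u.length = u → seg x k v.length = v := by
    intro k hk
    rw [← seg_take' x k _ _ hlen, hk, hvu]
  have hsplit := hi
  rw [seg_append'] at hsplit
  obtain ⟨hw1, hu1⟩ := List.append_inj hsplit (seg_length' _ _ _).symm
  rw [hi] at hcard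
  obtain ⟨j, hj, hne⟩ := Set.exists_ne_of_one_lt_ncard (by omega) w.length (s := {k | OccursAt u (seg x i (w.length + u.length)) k})
  rw [Set.mem_setOf_eq, occurs_iff] at hj
  obtain ⟨l, hl, hfl⟩ := decomp x v hv i w.length (hP _ hu1.symm)
    ⟨j, by omega, hP _ hj.2⟩
  exact ⟨l, hl, hfl.trans hw1.symm⟩
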